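/- arXiv:0810.0885 — 9 statements merged into one kernel-verified Lean document; each statement's English description precedes it below -/
import Mathlib

section
/- Let m ≥ 1 be an integer and let c_0, …, c_m and q_0, …, q_m be complex numbers satisfying the linear system: c_0 = Σ_{k=0}^{m} q_k, and for each n with 1 ≤ n ≤ m, c_n = (−1)^n · Σ_{k=1}^{m} q_k · C(k+n−1, n). Then q_0 = Σ_{n=0}^{m} C(m,n)·c_n and q_1 = Σ_{n=1}^{m} (C(m,n+1) − m·C(m,n))·c_n. -/
/-!
For a weight `a`, pairing the system with `a` gives
`∑ a n * c n = a 0 * q 0 + ∑_{k=1}^m q k * ∑_n a n * (-1)^n * C(k+n-1, n)`.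
Since `(-1)^n * C(k+n-1, n) = C(-k, n)`, the Chu–Vandermonde identity
(`sum_choose_mul_neg_one_pow_mul_choose`) evaluates the inner sum for `a n = C(m, n+j)` as
`C(m-k, m-j)`. For `j = 0` this vanishes for all `1 ≤ k ≤ m`, so only `q 0` survives. For `j = 1`
it is `1` if `k = 1` and `0` otherwise, so `a n = C(m, n+1) - m * C(m, n)`, for which `a 0 = 0`,
picks out exactly `q 1`.
-/

/-- Chu–Vandermonde for `C(m + (-k), m - j)`, with `C(-k, n)` written as
`(-1)^n * C(k+n-1, n)`. -/
lemma sum_choose_mul_neg_one_pow_mul_choose (m k j : ℕ) (hk : 1 ≤ k) (hkm : k ≤ m) (hj : j ≤ m) :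
    ∑ n ∈ Finset.range (m - j + 1), (m.choose (n + j) : ℤ) * ((-1) ^ n * ((k + n - 1).choose n : ℤ))
      = ((m - k).choose (m - j) : ℤ) := by
  have h := Ring.add_choose_eq (R := ℤ) (r := -(k : ℤ)) (s := (m : ℤ)) (m - j) (Commute.all _ _)
  rw [show (-(k : ℤ) + m) = ((m - k : ℕ) : ℤ) by omega, Ring.choose_natCast,
    Finset.Nat.sum_antidiagonal_eq_sum_range_succ_mk] at h
  rw [h]
  refine Finset.sum_congr rfl fun n hn => ?_
  have hn' : n ≤ m - j := by simpa [Nat.lt_succ_iff] using hn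
  rw [Ring.choose_natCast, Ring.choose_neg,
    show ((k : ℤ) + n - 1) = ((k + n - 1 : ℕ) : ℤ) by omega, Ring.choose_natCast,
    show m - j - n = m - (n + j) by omega, Nat.choose_symm (by omega : n + j ≤ m)]
  simp only [Int.negOnePow_def, zpow_natCast, Units.smul_def, Units.val_pow_eq_pow_val,
    Units.val_neg, Units.val_one, smul_eq_mul]
  ring

lemma sum_choose_weight_eq_zero (m k : ℕ) (hk : 1 ≤ k) (hkm : k ≤ m) :
    ∑ n ∈ Finset.range (m + 1), (m.choose n : ℂ) * ((-1) ^ n * ((k + n - 1).choose n : ℂ)) = 0 := by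
  have h := sum_choose_mul_neg_one_pow_mul_choose m k 0 hk hkm (Nat.zero_le _)
  rw [Nat.choose_eq_zero_of_lt (by omega : m - k < m - 0)] at h
  simpa using congrArg (Int.cast : ℤ → ℂ) h

lemma sum_choose_succ_weight (m k : ℕ) (hk : 1 ≤ k) (hkm : k ≤ m) :
    ∑ n ∈ Finset.range (m + 1),
      (m.choose (n + 1) : ℂ) * ((-1) ^ n * ((k + n - 1).choose n : ℂ)) = if k = 1 then 1 else 0 := by
  have h := sum_choose_mul_neg_one_pow_mul_choose m k 1 hk hkm (by omega)
  have hval : (m - k).choose (m - 1) = if k = 1 then 1 else 0 := by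
    split_ifs with h1
    · simp [h1]
    · exact Nat.choose_eq_zero_of_lt (by omega)
  rw [show m - 1 + 1 = m by omega, hval] at h
  rw [Finset.sum_range_succ, Nat.choose_succ_self]
  simpa using congrArg (Int.cast : ℤ → ℂ) h

/-- The system paired with an arbitrary weight `a`, after exchanging the order of summation. -/
lemma sum_weight_mul_eq (m : ℕ) (c q : ℕ → ℂ)
    (h0 : c 0 = ∑ k ∈ Finset.range (m + 1), q k)
    (hn : ∀ n : ℕ, 1 ≤ n → n ≤ m →
      c n = (-1) ^ n * ∑ k ∈ Finset.Icc 1 m, q k * ((k + n - 1).choose n : ℂ)) (a : ℕ → ℂ) :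
    ∑ n ∈ Finset.range (m + 1), a n * c n = a 0 * q 0 + ∑ k ∈ Finset.Icc 1 m,
      q k * ∑ n ∈ Finset.range (m + 1), a n * ((-1) ^ n * ((k + n - 1).choose n : ℂ)) := by
  have hc : ∀ n ∈ Finset.range (m + 1), a n * c n = (if n = 0 then a 0 * q 0 else 0) +
      ∑ k ∈ Finset.Icc 1 m, q k * (a n * ((-1) ^ n * ((k + n - 1).choose n : ℂ))) := by
    intro n hnm
    rcases Nat.eq_zero_or_pos n with rfl | hpos
    · rw [h0, Finset.range_eq_Ico, Finset.sum_eq_sum_Ico_succ_bot (by omega), mul_add,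
        Finset.mul_sum, show Finset.Ico (0 + 1) (m + 1) = Finset.Icc 1 m by rfl]
      simp [mul_comm]
    · rw [hn n hpos (by simpa [Nat.lt_succ_iff] using hnm), if_neg (by omega), zero_add,
        Finset.mul_sum, Finset.mul_sum]
      exact Finset.sum_congr rfl fun k _ => by ring
  rw [Finset.sum_congr rfl hc, Finset.sum_add_distrib, Finset.sum_comm]
  simp [Finset.mul_sum]

/-- **Lemma 1.3.** If `c₀,…,c_m` and `q₀,…,q_m` satisfy the linear system
`c₀ = Σ_{k=0}^m q_k` and `c_n = (-1)^n Σ_{k=1}^m q_k C(k+n-1, n)` for `1 ≤ n ≤ m`, then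
`q₀ = Σ_{n=0}^m C(m,n) c_n` and `q₁ = Σ_{n=1}^m (C(m,n+1) - m C(m,n)) c_n`. -/
theorem coefficients_of_inverse_power_approximation
    (m : ℕ) (hm : 1 ≤ m) (c q : ℕ → ℂ)
    (h0 : c 0 = ∑ k ∈ Finset.range (m + 1), q k)
    (hn : ∀ n : ℕ, 1 ≤ n → n ≤ m →
      c n = (-1) ^ n * ∑ k ∈ Finset.Icc 1 m, q k * ((k + n - 1).choose n : ℂ)) :
    q 0 = ∑ n ∈ Finset.range (m + 1), (m.choose n : ℂ) * c n ∧
    q 1 = ∑ n ∈ Finset.Icc 1 m,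
      ((m.choose (n + 1) : ℂ) - (m : ℂ) * (m.choose n : ℂ)) * c n := by
  constructor
  · rw [sum_weight_mul_eq m c q h0 hn (fun n => (m.choose n : ℂ)), Finset.sum_eq_zero]
    · simp
    · intro k hk
      rw [Finset.mem_Icc] at hk
      rw [sum_choose_weight_eq_zero m k hk.1 hk.2, mul_zero]
  · have h := sum_weight_mul_eq m c q h0 hn
      (fun n => (m.choose (n + 1) : ℂ) - (m : ℂ) * (m.choose n : ℂ))
    have hinner : ∀ k ∈ Finset.Icc 1 m, q k * ∑ n ∈ Finset.range (m + 1),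
        ((m.choose (n + 1) : ℂ) - (m : ℂ) * (m.choose n : ℂ)) *
          ((-1) ^ n * ((k + n - 1).choose n : ℂ)) = if k = 1 then q 1 else 0 := by
      intro k hk
      rw [Finset.mem_Icc] at hk
      simp only [sub_mul, Finset.sum_sub_distrib, mul_assoc (m : ℂ)]
      rw [← Finset.mul_sum, sum_choose_succ_weight m k hk.1 hk.2,
        sum_choose_weight_eq_zero m k hk.1 hk.2]
      split_ifs with h1 <;> simp [h1]
    rw [Finset.sum_congr rfl hinner] at h
    -- The weight vanishes at `n = 0`, so the sum may start at `n = 1`.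
    rw [Finset.range_eq_Ico, Finset.sum_eq_sum_Ico_succ_bot (by omega),
      show Finset.Ico (0 + 1) (m + 1) = Finset.Icc 1 m by rfl] at h
    simpa [hm] using h.symm
end

section
/- (Proposition 1) Let A be an additive commutative monoid, c : ℕ → A a sequence, and k ≥ 1 an integer. Define the sequence R : ℕ → A by R_0 = c_0, R_i = Σ_{s=0}^{i−1} C(i−1, s)·c_{i−s} for 1 ≤ i ≤ k, and R_i = Σ_{s=0}^{k−1} C(k−1, s)·c_{i−s} for i > k. Then the transformation of k-th order T_k sends R to the sequence R' given by R'_0 = c_0, R'_i = Σ_{s=0}^{i−1} C(i−1, s)·c_{i−s} for 1 ≤ i ≤ k+1, and R'_i = Σ_{s=0}^{k} C(k, s)·c_{i−s} for i > k+1. -/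
/-! Beyond index `k`, the `k`-th order transformation adds two neighbouring sums with the
coefficients `C(k-1, s)`, the second one shifted by one place. By Pascal's rule
(`sum_choose_succ_nsmul`) the result is the sum with the coefficients `C(k, s)`. At the boundary
index `k + 1` the shifted sum is `R k`, given by the middle-range formula, which at `i = k` has
the same shape. -/

open Finset

/-- The transformation of `k`-th order: `R'_i = R_i` for `i ≤ k` and
`R'_i = R_i + R_{i-1}` for `i > k`. -/
def transformOfOrder {A : Type*} [AddCommMonoid A] (k : ℕ) (R : ℕ → A) : ℕ → A :=
  fun i => if i ≤ k then R i else R i + R (i - 1)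

/-- Pascal's rule summed against an arbitrary sequence `f`. -/
theorem sum_choose_succ_nsmul {A : Type*} [AddCommMonoid A] (m : ℕ) (f : ℕ → A) :
    ∑ s ∈ Finset.range (m + 2), (m + 1).choose s • f s =
      ∑ s ∈ Finset.range (m + 1), m.choose s • f s +
        ∑ s ∈ Finset.range (m + 1), m.choose s • f (s + 1) := by
  have h : ∑ s ∈ Finset.range (m + 1), m.choose s • f s =
      ∑ s ∈ Finset.range (m + 1), m.choose (s + 1) • f (s + 1) + m.choose 0 • f 0 := by
    -- The term `s = m + 1` may be added freely, since `m.choose (m + 1) = 0`.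
    rw [← Finset.sum_range_succ' (fun s => m.choose s • f s) (m + 1),
      Finset.sum_range_succ _ (m + 1)]
    simp
  rw [Finset.sum_range_succ', h]
  simp only [Nat.choose_succ_succ', add_nsmul, Finset.sum_add_distrib, Nat.choose_zero_right]
  abel

/-- **Proposition 1.** If `R₀ = c₀`, `R_i = Σ_{s=0}^{i-1} C(i-1,s) c_{i-s}` for `1 ≤ i ≤ k`
and `R_i = Σ_{s=0}^{k-1} C(k-1,s) c_{i-s}` for `i > k`, then the transformation of `k`-th
order sends `R` to `R'` with `R'₀ = c₀`, `R'_i = Σ_{s=0}^{i-1} C(i-1,s) c_{i-s}` for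
`1 ≤ i ≤ k+1`, and `R'_i = Σ_{s=0}^{k} C(k,s) c_{i-s}` for `i > k+1`. -/
theorem transformOfOrder_of_binomial_form
    {A : Type*} [AddCommMonoid A] (k : ℕ) (hk : 1 ≤ k) (c R : ℕ → A)
    (hR0 : R 0 = c 0)
    (hR1 : ∀ i : ℕ, 1 ≤ i → i ≤ k →
      R i = ∑ s ∈ Finset.range i, (i - 1).choose s • c (i - s))
    (hR2 : ∀ i : ℕ, k < i →
      R i = ∑ s ∈ Finset.range k, (k - 1).choose s • c (i - s)) :
    transformOfOrder k R 0 = c 0 ∧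
    (∀ i : ℕ, 1 ≤ i → i ≤ k + 1 →
      transformOfOrder k R i = ∑ s ∈ Finset.range i, (i - 1).choose s • c (i - s)) ∧
    (∀ i : ℕ, k + 1 < i →
      transformOfOrder k R i = ∑ s ∈ Finset.range (k + 1), k.choose s • c (i - s)) := by
  obtain ⟨m, rfl⟩ : ∃ m, k = m + 1 := ⟨k - 1, by omega⟩
  have tail : ∀ i : ℕ, m + 1 < i → transformOfOrder (m + 1) R i =
      ∑ s ∈ Finset.range (m + 2), (m + 1).choose s • c (i - s) := by
    intro i hi
    have hprev : R (i - 1) = ∑ s ∈ Finset.range (m + 1), m.choose s • c (i - (s + 1)) := by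
      have hshift : ∑ s ∈ Finset.range (m + 1), m.choose s • c (i - (s + 1)) =
          ∑ s ∈ Finset.range (m + 1), m.choose s • c (i - 1 - s) :=
        Finset.sum_congr rfl fun s _ => by rw [Nat.sub_sub, Nat.add_comm 1 s]
      rw [hshift]
      rcases Nat.lt_or_ge (m + 1) (i - 1) with h | h
      · exact hR2 (i - 1) h
      · obtain rfl : i = m + 2 := by omega
        exact hR1 (m + 1) (by omega) le_rfl
    rw [sum_choose_succ_nsmul m (fun s => c (i - s)), transformOfOrder, if_neg (by omega),
      hR2 i hi, hprev]
    rfl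
  refine ⟨by simp [transformOfOrder, hR0], fun i h1 h2 => ?_, fun i hi => tail i (by omega)⟩
  rcases Nat.lt_or_ge (m + 1) i with h | h
  · obtain rfl : i = m + 2 := by omega
    exact tail (m + 2) h
  · rw [transformOfOrder, if_pos h]
    exact hR1 i h1 h
end

section
/- (Proposition 3) Let A be an additive commutative monoid, R : ℕ → A a sequence, and m ≥ 1 an integer. Let R^{(m)} be the sequential transformation of m-th order of R. Then R^{(m)}_0 = R_0, R^{(m)}_i = Σ_{s=0}^{i−1} C(i−1, s)·R_{i−s} for 1 ≤ i ≤ m+1, and R^{(m)}_i = Σ_{s=0}^{m} C(m, s)·R_{i−s} for i > m+1. -/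
/-!
Away from index `0` both ranges of the formula are one: the entry at `j + 1` of the `m`-th
sequence is the binomial sum of order `n = min j m`. Indeed `T_{m+1}` leaves the entry at `j + 1`
alone when `j ≤ m`, where `min j m = j` no longer depends on `m`; when `j > m` it adds the entries
at `j + 1` and `j`, both binomial sums of order `m`, and Pascal's rule
(`Finset.sum_choose_succ_nsmul`) turns their sum into the binomial sum of order `m + 1`.
-/

open Finset

/-- The sequential transformation of `m`-th order: `R⁽⁰⁾ = R` and
`R⁽ᵏ⁾ = T_k (R⁽ᵏ⁻¹⁾)` for `k = 1, …, m`. -/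
def seqTransform {A : Type*} [AddCommMonoid A] : ℕ → (ℕ → A) → (ℕ → A)
  | 0, R => R
  | (k + 1), R => transformOfOrder (k + 1) (seqTransform k R)

theorem seqTransform_zero_index {A : Type*} [AddCommMonoid A] (m : ℕ) (R : ℕ → A) :
    seqTransform m R 0 = R 0 := by
  induction m with
  | zero => rfl
  | succ m ih => simp [seqTransform, transformOfOrder, ih]

/-- The two ranges of the closed formula in one: writing the index as `j + 1` and truncating the
order to `min j m` makes the induction on `m` go through for all `j` at once. -/
theorem seqTransform_succ_index {A : Type*} [AddCommMonoid A] (m : ℕ) (R : ℕ → A) (j : ℕ) :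
    seqTransform m R (j + 1) =
      ∑ s ∈ range (min j m + 1), (min j m).choose s • R (j + 1 - s) := by
  induction m generalizing j with
  | zero => simp [seqTransform]
  | succ m ih =>
    simp only [seqTransform, transformOfOrder]
    split_ifs with h
    · rw [ih, min_eq_left (by omega : j ≤ m), min_eq_left (by omega : j ≤ m + 1)]
    · obtain ⟨j, rfl⟩ : ∃ k, j = k + 1 := ⟨j - 1, by omega⟩
      rw [Nat.add_sub_cancel, ih, ih, min_eq_right (by omega : m ≤ j + 1),
        min_eq_right (by omega : m ≤ j), min_eq_right (by omega : m + 1 ≤ j + 1),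
        sum_choose_succ_nsmul (fun s _ => R (j + 1 + 1 - s))]
      simp only [Nat.add_sub_add_right]

/-- **Proposition 3.** The sequential transformation of `m`-th order of `R` satisfies
`R⁽ᵐ⁾₀ = R₀`, `R⁽ᵐ⁾_i = Σ_{s=0}^{i-1} C(i-1,s) R_{i-s}` for `1 ≤ i ≤ m+1`, and
`R⁽ᵐ⁾_i = Σ_{s=0}^{m} C(m,s) R_{i-s}` for `i > m+1`. -/
theorem seqTransform_eq_binomial_sum
    {A : Type*} [AddCommMonoid A] (m : ℕ) (hm : 1 ≤ m) (R : ℕ → A) :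
    seqTransform m R 0 = R 0 ∧
    (∀ i : ℕ, 1 ≤ i → i ≤ m + 1 →
      seqTransform m R i = ∑ s ∈ Finset.range i, (i - 1).choose s • R (i - s)) ∧
    (∀ i : ℕ, m + 1 < i →
      seqTransform m R i = ∑ s ∈ Finset.range (m + 1), m.choose s • R (i - s)) := by
  refine ⟨seqTransform_zero_index m R, fun i hi him => ?_, fun i hi => ?_⟩
  · obtain ⟨j, rfl⟩ : ∃ k, i = k + 1 := ⟨i - 1, by omega⟩
    rw [seqTransform_succ_index, min_eq_left (by omega : j ≤ m), Nat.add_sub_cancel]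
  · obtain ⟨j, rfl⟩ : ∃ k, i = k + 1 := ⟨i - 1, by omega⟩
    rw [seqTransform_succ_index, min_eq_right (by omega : m ≤ j)]
end

section
/- (Proposition 4) Let j and m be integers with m ≥ 1 and m + 1 ≤ j. Define the integer sequence R : ℕ → ℤ by R_i = (−1)^i·C(i+j−1, j−1). Then the sequential transformation of m-th order R^{(m)} of R satisfies R^{(m)}_i = (−1)^i·C(j, j−i) for 0 ≤ i ≤ m+1 and R^{(m)}_i = (−1)^i·C(i+j−m−1, j−m−1) for i > m+1. -/
/-!
The claim is proved by induction on `m`, starting from `m = 0`, with the second formula extended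
down to `i = m + 1`, where both formulas give `(-1)^i C(j, j-i)`. Because of the alternating sign,
adding `R_{i-1}` to `R_i` subtracts binomial coefficients, and Pascal's rule
`C(i+d+1, d+1) - C(i+d, d+1) = C(i+d, d)`, where `j = m + 2 + d`, turns the formula for `m` into
the one for `m + 1` at every `i ≥ m + 2`. The entries with `i ≤ m + 1` are left unchanged by the
transformation of order `m + 1`.
-/


open Finset

/-- The closed form of the `m`-th transform, with `d = j - m - 1`. The two ranges overlap at
`i = m + 1`; the overlap is what lets the induction reach the entry `i = m + 2`. -/
theorem seqTransform_alternating_aux (j : ℕ) (R : ℕ → ℤ)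
    (hR : ∀ i : ℕ, R i = (-1) ^ i * ((i + j - 1).choose (j - 1) : ℤ)) (m : ℕ) :
    ∀ d : ℕ, j = m + 1 + d →
      (∀ i : ℕ, i ≤ m + 1 → seqTransform m R i = (-1) ^ i * (j.choose (j - i) : ℤ)) ∧
      (∀ i : ℕ, m + 1 ≤ i → seqTransform m R i = (-1) ^ i * ((i + d).choose d : ℤ)) := by
  induction m with
  | zero =>
    rintro d rfl
    refine ⟨fun i hi => ?_, fun i _ => ?_⟩
    · interval_cases i
      · simp [seqTransform, hR]
      · simp [seqTransform, hR]
    · rw [seqTransform, hR]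
      congr 3 <;> omega
  | succ m ih =>
    intro d hd
    obtain ⟨h1, h2⟩ := ih (d + 1) (by omega)
    have tail : ∀ i : ℕ, m + 2 ≤ i →
        seqTransform (m + 1) R i = (-1) ^ i * ((i + d).choose d : ℤ) := by
      intro i hi
      obtain ⟨n, rfl⟩ : ∃ n, i = n + 1 := ⟨i - 1, by omega⟩
      simp only [seqTransform, transformOfOrder]
      rw [if_neg (by omega), h2 _ (by omega), Nat.add_sub_cancel, h2 n (by omega),
        show n + 1 + (d + 1) = (n + 1 + d) + 1 by omega, Nat.choose_succ_succ,
        show n + (d + 1) = n + 1 + d by omega]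
      push_cast
      ring
    refine ⟨fun i hi => ?_, tail⟩
    rcases Nat.lt_or_ge (m + 1) i with h | h
    · obtain rfl : i = m + 2 := by omega
      rw [tail _ le_rfl]
      congr 3 <;> omega
    · simp only [seqTransform, transformOfOrder]
      rw [if_pos h, h1 i h]

/-- **Proposition 4.** Let `m ≥ 1` and `m + 1 ≤ j`. If `R_i = (-1)^i C(i+j-1, j-1)`, then
`R⁽ᵐ⁾_i = (-1)^i C(j, j-i)` for `0 ≤ i ≤ m+1` and `R⁽ᵐ⁾_i = (-1)^i C(i+j-m-1, j-m-1)`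
for `i > m+1`. -/
theorem seqTransform_of_alternating_binomial
    (j m : ℕ) (hm : 1 ≤ m) (hmj : m + 1 ≤ j) (R : ℕ → ℤ)
    (hR : ∀ i : ℕ, R i = (-1) ^ i * ((i + j - 1).choose (j - 1) : ℤ)) :
    (∀ i : ℕ, i ≤ m + 1 →
      seqTransform m R i = (-1) ^ i * (j.choose (j - i) : ℤ)) ∧
    (∀ i : ℕ, m + 1 < i →
      seqTransform m R i = (-1) ^ i * ((i + j - m - 1).choose (j - m - 1) : ℤ)) := by
  obtain ⟨h1, h2⟩ := seqTransform_alternating_aux j R hR m (j - m - 1) (by omega)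
  refine ⟨h1, fun i hi => ?_⟩
  rw [h2 i hi.le]
  congr 3
  omega
end

section
/- (Proposition 6) For all nonnegative integers k, n, m with k > m + 1 and n ≤ m, the strict inequality (m+1)!·C(k, m+1) > C(k+n−1, n) holds. -/
/-!
The right-hand side is the falling factorial `k (k-1) ⋯ (k-m)`, and the left-hand side is
nondecreasing in `n`, so it suffices to treat `n = m`. For fixed `k`, passing from `m` to `m + 1`
multiplies `C(k+m-1, m)` by `(k+m)/(m+1)` and the falling factorial by `k-m-1`. When `m ≥ 1` and
`k ≥ m + 4` one has `k + m ≤ (m+1)(k-m-1)`, so the inequality propagates by induction on `m` from the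
immediate cases `m = 0, 1`. This
comparison of factors fails (by one) on the diagonal `k = (m+1) + 2`; there the claim for `m + 1`
follows instead from `C(2m+1, m) ≤ 4^m < (m+2)!`, applied with `m + 1` in place of `m`.
-/

lemma four_pow_lt_factorial (m : ℕ) : 4 ^ m < (m + 2).factorial := by
  induction m with
  | zero => decide
  | succ m ih =>
    rcases Nat.eq_zero_or_pos m with rfl | hm
    · decide
    · rw [pow_succ, show m + 1 + 2 = (m + 2) + 1 by ring, Nat.factorial_succ]
      nlinarith

/-- The case `n = m`, with `k = j + 1` and the right-hand side as a falling factorial. -/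
lemma choose_lt_descFactorial (j m : ℕ) (h : m < j) :
    (j + m).choose m < (j + 1).descFactorial (m + 1) := by
  induction m with
  | zero => simp; omega
  | succ m ih =>
    rcases Nat.eq_zero_or_pos m with rfl | hm
    · simp [Nat.descFactorial_succ]
      nlinarith
    -- `j = m + 2` is the diagonal `k = (m + 1) + 2`; otherwise the ratio comparison applies.
    rcases Nat.lt_or_ge (m + 2) j with hj | hj
    · have ih := ih (by omega)
      obtain ⟨t, rfl⟩ : ∃ t, j = m + 3 + t := ⟨j - (m + 3), by omega⟩
      rw [Nat.descFactorial_succ, show m + 3 + t + 1 - (m + 1) = t + 3 by omega]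
      have e := Nat.add_one_mul_choose_eq (m + 3 + t + m) m
      rw [show m + 3 + t + m + 1 = m + 3 + t + (m + 1) by ring] at e
      -- The growth factors satisfy `k + m ≤ (m + 1) (k - m - 1)`.
      have hr : m + 3 + t + (m + 1) ≤ (m + 1) * (t + 3) := by nlinarith
      refine lt_of_mul_lt_mul_right (a := m + 1) ?_ (Nat.zero_le _)
      rw [← e]
      calc _ ≤ (m + 1) * (t + 3) * (m + 3 + t + m).choose m := Nat.mul_le_mul_right _ hr
        _ < (m + 1) * (t + 3) * (m + 3 + t + 1).descFactorial (m + 1) :=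
          Nat.mul_lt_mul_of_pos_left ih (by positivity)
        _ = _ := by ring
    · obtain rfl : j = m + 2 := by omega
      have hd : (m + 2 + 1).descFactorial (m + 1 + 1) = (m + 1 + 2).factorial := by
        have := Nat.factorial_mul_descFactorial (n := m + 3) (k := m + 2) (by omega)
        rwa [show m + 3 - (m + 2) = 1 by omega, Nat.factorial_one, one_mul] at this
      rw [hd, show m + 2 + (m + 1) = 2 * (m + 1) + 1 by ring]
      exact (Nat.choose_middle_le_pow (m + 1)).trans_lt (four_pow_lt_factorial (m + 1))

/-- **Proposition 6.** For nonnegative integers `k, n, m` with `k > m + 1` and `n ≤ m`,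
`(m+1)! · C(k, m+1) > C(k+n-1, n)`. -/
theorem factorial_mul_choose_gt
    (k n m : ℕ) (hk : m + 1 < k) (hn : n ≤ m) :
    (k + n - 1).choose n < (m + 1).factorial * k.choose (m + 1) := by
  obtain ⟨j, rfl⟩ : ∃ j, k = j + 1 := ⟨k - 1, by omega⟩
  rw [← Nat.descFactorial_eq_factorial_mul_choose, show j + 1 + n - 1 = j + n by omega]
  refine lt_of_le_of_lt ?_ (choose_lt_descFactorial j m (by omega))
  -- Monotonicity in `n` is visible after the symmetry `C(j+n, n) = C(j+n, j)`.
  rw [← Nat.choose_symm_add, ← Nat.choose_symm_add]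
  exact Nat.choose_le_choose j (by omega)
end

section
/- (Proposition 8) For all integers m, k, a with k ≥ 1, m ≥ 0 and 0 ≤ a ≤ m, one has Σ_{n=0}^{m} (−1)^n·C(m, n)·C(k+n−1, n) = (−1)^a · Σ_{r=1}^{m+1−a} (−1)^{r−1}·C(k+r−2, r−1+a)·C(m−a, r−1). -/
open Finset

/-! Put `k = K + 1`, `m = p + a`, and let
`F(a, p) = (-1)^a ∑_{j ≤ p} (-1)^j C(K + j, j + a) C(p, j)`. After reindexing `r = j + 1` the right
side of the theorem is `F(a, m - a)`, and the left side is `F(0, m)`. Splitting `C(p + 1, j)` by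
Pascal's rule and summing by parts (`sum_alternating_choose_succ`) replaces `C(K + j, j + a)` by
minus its forward difference in `j`, which by Pascal's rule again is `-C(K + j, j + a + 1)`. Hence
`F(a, p + 1) = F(a + 1, p)`, so `F(a, m - a)` does not depend on `a`. -/

/-- Summation by parts for alternating binomial sums: lowering the upper index of the binomial
coefficient by one turns `f` into its negated forward difference. -/
lemma sum_alternating_choose_succ (f : ℕ → ℤ) (p : ℕ) :
    ∑ j ∈ Finset.range (p + 2), (-1 : ℤ) ^ j * f j * ((p + 1).choose j : ℤ) =
      ∑ j ∈ Finset.range (p + 1), (-1 : ℤ) ^ j * (f j - f (j + 1)) * (p.choose j : ℤ) := by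
  -- The top term vanishes because `C(p, p + 1) = 0`.
  have h : ∑ j ∈ Finset.range (p + 1), (-1 : ℤ) ^ j * f j * (p.choose j : ℤ) =
      ∑ j ∈ Finset.range (p + 2), (-1 : ℤ) ^ j * f j * (p.choose j : ℤ) := by
    rw [Finset.sum_range_succ _ (p + 1)]
    simp
  have h₂ : ∑ j ∈ Finset.range (p + 1), (-1 : ℤ) ^ j * (f j - f (j + 1)) * (p.choose j : ℤ) =
      ∑ j ∈ Finset.range (p + 1), (-1 : ℤ) ^ j * f j * (p.choose j : ℤ) +
        ∑ j ∈ Finset.range (p + 1), (-1 : ℤ) ^ (j + 1) * f (j + 1) * (p.choose j : ℤ) := by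
    rw [← Finset.sum_add_distrib]
    exact Finset.sum_congr rfl fun j _ => by ring
  rw [h₂, h, Finset.sum_range_succ', Finset.sum_range_succ' _ (p + 1), add_right_comm,
    ← Finset.sum_add_distrib]
  congr 1
  · refine Finset.sum_congr rfl fun j _ => ?_
    rw [Nat.choose_succ_succ]
    push_cast
    ring
  · simp

/-- The invariance of `F(a, m - a)` in `a`, in the form `F(0, p + a) = F(a, p)`. -/
lemma sum_alternating_choose_shift (K a p : ℕ) :
    ∑ j ∈ Finset.range (p + a + 1),
        (-1 : ℤ) ^ j * ((K + j).choose j : ℤ) * ((p + a).choose j : ℤ) =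
      (-1) ^ a * ∑ j ∈ Finset.range (p + 1),
        (-1 : ℤ) ^ j * ((K + j).choose (j + a) : ℤ) * (p.choose j : ℤ) := by
  induction a generalizing p with
  | zero => simp
  | succ a ih =>
    have e : p + (a + 1) = p + 1 + a := by omega
    rw [e, ih (p + 1), sum_alternating_choose_succ fun j => ((K + j).choose (j + a) : ℤ),
      pow_succ, mul_assoc, Finset.mul_sum _ _ (-1 : ℤ)]
    congr 1
    refine Finset.sum_congr rfl fun j _ => ?_
    have e₂ : (K + (j + 1)).choose (j + 1 + a) =
        (K + j).choose (j + a) + (K + j).choose (j + (a + 1)) := by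
      rw [show j + 1 + a = (j + a) + 1 by omega, ← add_assoc K, Nat.choose_succ_succ]
      rfl
    rw [e₂]
    push_cast
    ring

/-- **Proposition 8.** For integers `k ≥ 1`, `m ≥ 0`, `0 ≤ a ≤ m`,
`Σ_{n=0}^{m} (-1)^n C(m,n) C(k+n-1,n)
  = (-1)^a Σ_{r=1}^{m+1-a} (-1)^{r-1} C(k+r-2, r-1+a) C(m-a, r-1)`. -/
theorem alternating_binomial_sum_abel
    (m k a : ℕ) (hk : 1 ≤ k) (ha : a ≤ m) :
    ∑ n ∈ Finset.range (m + 1),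
        (-1 : ℤ) ^ n * (m.choose n : ℤ) * ((k + n - 1).choose n : ℤ) =
      (-1) ^ a * ∑ r ∈ Finset.Icc 1 (m + 1 - a),
        (-1 : ℤ) ^ (r - 1) * ((k + r - 2).choose (r - 1 + a) : ℤ) *
          ((m - a).choose (r - 1) : ℤ) := by
  obtain ⟨K, rfl⟩ := Nat.exists_eq_add_of_le' hk
  obtain ⟨p, rfl⟩ := Nat.exists_eq_add_of_le' ha
  have hl := sum_alternating_choose_shift K a p
  rw [← Finset.Ico_add_one_right_eq_Icc, Finset.sum_Ico_eq_sum_range,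
    show p + a + 1 - a + 1 - 1 = p + 1 by omega, Nat.add_sub_cancel]
  convert hl using 1
  · refine Finset.sum_congr rfl fun n _ => ?_
    rw [show K + 1 + n - 1 = K + n by omega]
    ring
  · congr 1
    refine Finset.sum_congr rfl fun j _ => ?_
    rw [show K + 1 + (1 + j) - 2 = K + j by omega, Nat.add_sub_cancel_left]
end

section
/- (Proposition 9) For all integers m, k, a with m > 1, k ≥ 1 and 1 ≤ a ≤ m − 2, one has Σ_{n=1}^{m−1} (−1)^n·C(m, n+1)·C(k+n−1, k−1) = (−1)^a · Σ_{n=1}^{m−1−a} (−1)^n·C(m−a, n+1)·C(k+n−1, k−1−a) + Σ_{r=1}^{a} (−1)^r·(m−r)·C(k, r). -/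
/-!
By symmetry of binomial coefficients, `C(k+n-1, k-1-a) = C(k-1+n, n+a)`, and the right-hand side
vanishes for `a ≥ k`, so it also absorbs the zero convention. The sums
`T(M, a) = ∑_{0 ≤ n < M} (-1)^n C(M, n+1) C(k-1+n, n+a)`, which include the term `n = 0`, satisfy
`T(M+1, a) = C(k-1, a) - T(M, a+1)`: apply Pascal's rule to `C(M+1, n+1)`, shift the index in the
part with `C(M, n)`, and apply Pascal's rule to `C(k+n, n+1+a)` (`fullSum_succ`).
Removing the term `n = 0`, which is `M * C(k-1, a)`, gives a recursion whose inhomogeneous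
part is `-M * C(k, a+1)`; iterating it `a` times gives the theorem (`partialSum_add`).
-/

open Finset

/-- The sum `∑_{0 ≤ n < M} (-1)^n C(M, n+1) C(K+n, n+a)`, with `K` in the role of `k - 1`. -/
def fullSum (K M a : ℕ) : ℤ :=
  ∑ n ∈ range M, (-1 : ℤ) ^ n * (M.choose (n + 1) : ℤ) * ((K + n).choose (n + a) : ℤ)

/-- The sum `fullSum K M a` without its term `n = 0`. -/
def partialSum (K M a : ℕ) : ℤ := fullSum K M a - M * (K.choose a : ℤ)

theorem fullSum_succ (K M a : ℕ) :
    fullSum K (M + 1) a = K.choose a - fullSum K M (a + 1) := by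
  have pascal : fullSum K (M + 1) a =
      ∑ n ∈ range (M + 1), (-1 : ℤ) ^ n * (M.choose n : ℤ) * ((K + n).choose (n + a) : ℤ) +
      ∑ n ∈ range (M + 1),
        (-1 : ℤ) ^ n * (M.choose (n + 1) : ℤ) * ((K + n).choose (n + a) : ℤ) := by
    rw [fullSum, ← sum_add_distrib]
    refine sum_congr rfl fun n _ => ?_
    rw [Nat.choose_succ_succ' M n]
    push_cast
    ring
  have shift : ∀ n, (-1 : ℤ) ^ (n + 1) * (M.choose (n + 1) : ℤ) *
        ((K + (n + 1)).choose (n + 1 + a) : ℤ) =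
      -((-1 : ℤ) ^ n * (M.choose (n + 1) : ℤ) * ((K + n).choose (n + a) : ℤ)) -
        (-1 : ℤ) ^ n * (M.choose (n + 1) : ℤ) * ((K + n).choose (n + (a + 1)) : ℤ) := by
    intro n
    have h : (K + (n + 1)).choose (n + 1 + a) =
        (K + n).choose (n + a) + (K + n).choose (n + (a + 1)) := by
      rw [show n + 1 + a = (n + a) + 1 by ring, ← add_assoc, Nat.choose_succ_succ', add_assoc n a 1]
    rw [h]
    push_cast
    ring
  rw [pascal, sum_range_succ', sum_range_succ]
  simp only [shift, sum_sub_distrib, sum_neg_distrib, Nat.choose_succ_self, fullSum]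
  simp
  ring

theorem partialSum_succ (K M a : ℕ) :
    partialSum K (M + 1) a = -partialSum K M (a + 1) - M * ((K + 1).choose (a + 1) : ℤ) := by
  rw [partialSum, partialSum, fullSum_succ, Nat.choose_succ_succ']
  push_cast
  ring

theorem partialSum_add (K M a : ℕ) :
    partialSum K (M + a) 0 = (-1) ^ a * partialSum K M a +
      ∑ r ∈ Icc 1 a, (-1 : ℤ) ^ r * (((M + a : ℕ) : ℤ) - r) * ((K + 1).choose r : ℤ) := by
  induction a generalizing M with
  | zero => simp
  | succ a ih =>
    rw [show M + (a + 1) = (M + 1) + a by ring, ih, partialSum_succ,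
      sum_Icc_succ_top (by omega : 1 ≤ a + 1)]
    push_cast
    ring

theorem partialSum_eq_sum_Icc (K M a : ℕ) (hM : 1 ≤ M) :
    partialSum K M a = ∑ n ∈ Icc 1 (M - 1),
      (-1 : ℤ) ^ n * (M.choose (n + 1) : ℤ) * ((K + n).choose (n + a) : ℤ) := by
  obtain ⟨N, rfl⟩ := Nat.exists_eq_add_of_le' hM
  rw [partialSum, fullSum, sum_range_succ', range_eq_Ico, sum_Ico_add'
    (fun n => (-1 : ℤ) ^ n * ((N + 1).choose (n + 1) : ℤ) * ((K + n).choose (n + a) : ℤ)) 0 N 1]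
  have h : Ico (0 + 1) (N + 1) = Icc 1 (N + 1 - 1) := by
    ext x
    simp only [mem_Ico, mem_Icc]
    omega
  rw [h]
  simp

/-- **Proposition 9.** For integers `m > 1`, `k ≥ 1`, `1 ≤ a ≤ m - 2`,
`Σ_{n=1}^{m-1} (-1)^n C(m,n+1) C(k+n-1,k-1)
  = (-1)^a Σ_{n=1}^{m-1-a} (-1)^n C(m-a,n+1) C(k+n-1,k-1-a)
    + Σ_{r=1}^{a} (-1)^r (m-r) C(k,r)`,
where `C(k+n-1, k-1-a)` is understood to be `0` when `k - 1 - a < 0`. -/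
theorem alternating_binomial_sum_abel'
    (m k a : ℕ) (hm : 1 < m) (hk : 1 ≤ k) (ha1 : 1 ≤ a) (ha2 : a ≤ m - 2) :
    ∑ n ∈ Finset.Icc 1 (m - 1),
        (-1 : ℤ) ^ n * (m.choose (n + 1) : ℤ) * ((k + n - 1).choose (k - 1) : ℤ) =
      (-1) ^ a * ∑ n ∈ Finset.Icc 1 (m - 1 - a),
          (-1 : ℤ) ^ n * ((m - a).choose (n + 1) : ℤ) *
            (if a + 1 ≤ k then ((k + n - 1).choose (k - 1 - a) : ℤ) else 0) +
        ∑ r ∈ Finset.Icc 1 a, (-1 : ℤ) ^ r * ((m : ℤ) - (r : ℤ)) * (k.choose r : ℤ) := by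
  obtain ⟨K, rfl⟩ := Nat.exists_eq_add_of_le' hk
  obtain ⟨M, rfl⟩ := Nat.exists_eq_add_of_le' (show a ≤ m by omega)
  have key := partialSum_add K M a
  rw [partialSum_eq_sum_Icc K (M + a) 0 (by omega),
    partialSum_eq_sum_Icc K M a (by omega)] at key
  have left : ∀ n, (K + 1 + n - 1).choose (K + 1 - 1) = (K + n).choose (n + 0) := by
    intro n
    rw [show K + 1 + n - 1 = K + n by omega, Nat.add_sub_cancel, add_zero, Nat.choose_symm_add]
  have right : ∀ n, (if a + 1 ≤ K + 1 then ((K + 1 + n - 1).choose (K + 1 - 1 - a) : ℤ) else 0) =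
      ((K + n).choose (n + a) : ℤ) := by
    intro n
    rw [show K + 1 + n - 1 = K + n by omega]
    split_ifs with h
    · rw [Nat.choose_symm_of_eq_add (show K + n = (K + 1 - 1 - a) + (n + a) by omega)]
    · rw [Nat.choose_eq_zero_of_lt (by omega), Nat.cast_zero]
  simp only [left, right]
  rw [show M + a - 1 - a = M - 1 by omega, Nat.add_sub_cancel]
  exact key
end

section
/- For all integers m ≥ 1 and k ≥ 1, one has Σ_{n=1}^{m−1} (−1)^n·C(m, n+1)·C(k+n−1, k−1) = Σ_{r=1}^{m−1} (−1)^r·(m−r)·C(k, r). -/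
/-!
Both sides extend to `n = 0` and `r = 0`, where each gains the term `m`, and the extended sums
vanish at `m = 0`. So it suffices to compare increments in `m`. With `k = j + 1`, Pascal's rule
turns the increment on the left into `∑ n ≤ m, (-1)^n C(m,n) C(j+n,j)`, which up to sign is the
`m`-th finite difference of the polynomial `x ↦ C(x,j)` at `x = j`, hence `(-1)^m C(j,m)`
(`alternating_sum_choose_add`). The increment on the right is the partial alternating row sum
`∑ r ≤ m, (-1)^r C(j+1,r)`, which is also `(-1)^m C(j,m)`.
-/

open Finset

/-- Pascal's rule in difference form: up to sign, differences of order `m + 1` are differences of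
differences of order `m`. -/
lemma alternating_sum_choose_succ (m : ℕ) (g : ℕ → ℤ) :
    ∑ n ∈ range (m + 2), (-1 : ℤ) ^ n * ((m + 1).choose n : ℤ) * g n =
      ∑ n ∈ range (m + 1), (-1 : ℤ) ^ n * (m.choose n : ℤ) * g n -
        ∑ n ∈ range (m + 1), (-1 : ℤ) ^ n * (m.choose n : ℤ) * g (n + 1) := by
  have h : ∑ n ∈ range (m + 1), (-1 : ℤ) ^ n * (m.choose n : ℤ) * g n =
      ∑ n ∈ range (m + 2), (-1 : ℤ) ^ n * (m.choose n : ℤ) * g n := by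
    rw [sum_range_succ _ (m + 1)]
    simp
  rw [h, sum_range_succ', sum_range_succ' _ (m + 1), add_sub_right_comm, ← sum_sub_distrib]
  congr 1
  · refine sum_congr rfl fun n _ => ?_
    rw [Nat.choose_succ_succ]
    push_cast
    ring
  · simp

/-- The `m`-th finite difference of `x ↦ C(x,j)` at `N` is `C(N,j-m)`, read as `0` when `j < m`;
the alternating sum is `(-1)^m` times that difference. -/
lemma alternating_sum_choose_add (m j N : ℕ) :
    ∑ n ∈ range (m + 1), (-1 : ℤ) ^ n * (m.choose n : ℤ) * ((N + n).choose j : ℤ) =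
      (-1) ^ m * (if m ≤ j then (N.choose (j - m) : ℤ) else 0) := by
  induction m generalizing N with
  | zero => simp
  | succ m ih =>
    have h := ih (N + 1)
    simp only [add_assoc, add_comm 1] at h
    rw [alternating_sum_choose_succ m fun n => ((N + n).choose j : ℤ), ih, h]
    rcases lt_trichotomy m j with hlt | rfl | hgt
    · obtain ⟨d, rfl⟩ := Nat.exists_eq_add_of_lt hlt
      rw [if_pos (by omega), if_pos (by omega), if_pos (by omega),
        show m + d + 1 - m = d + 1 by omega, show m + d + 1 - (m + 1) = d by omega,
        Nat.choose_succ_succ]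
      push_cast
      ring
    · simp
    · rw [if_neg (by omega), if_neg (by omega), if_neg (by omega)]
      ring

/-- The identity with the `n = 0` and `r = 0` terms included and `k = j + 1`. -/
lemma alternating_binomial_sum_range (m j : ℕ) :
    ∑ n ∈ range m, (-1 : ℤ) ^ n * (m.choose (n + 1) : ℤ) * ((j + n).choose j : ℤ) =
      ∑ r ∈ range m, (-1 : ℤ) ^ r * ((m : ℤ) - (r : ℤ)) * ((j + 1).choose r : ℤ) := by
  induction m with
  | zero => simp
  | succ m ih =>
    have hl : ∑ n ∈ range (m + 1),
          (-1 : ℤ) ^ n * ((m + 1).choose (n + 1) : ℤ) * ((j + n).choose j : ℤ) =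
        ∑ n ∈ range (m + 1), (-1 : ℤ) ^ n * (m.choose n : ℤ) * ((j + n).choose j : ℤ) +
          ∑ n ∈ range m, (-1 : ℤ) ^ n * (m.choose (n + 1) : ℤ) * ((j + n).choose j : ℤ) := by
      have h0 : ∑ n ∈ range m, (-1 : ℤ) ^ n * (m.choose (n + 1) : ℤ) * ((j + n).choose j : ℤ) =
          ∑ n ∈ range (m + 1),
            (-1 : ℤ) ^ n * (m.choose (n + 1) : ℤ) * ((j + n).choose j : ℤ) := by
        simp [sum_range_succ]
      rw [h0, ← sum_add_distrib]
      refine sum_congr rfl fun n _ => ?_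
      rw [Nat.choose_succ_succ]
      push_cast
      ring
    have hr : ∑ r ∈ range (m + 1),
          (-1 : ℤ) ^ r * (((m + 1 : ℕ) : ℤ) - (r : ℤ)) * ((j + 1).choose r : ℤ) =
        ∑ r ∈ range (m + 1), (-1 : ℤ) ^ r * ((j + 1).choose r : ℤ) +
          ∑ r ∈ range m, (-1 : ℤ) ^ r * ((m : ℤ) - (r : ℤ)) * ((j + 1).choose r : ℤ) := by
      have h0 : ∑ r ∈ range m, (-1 : ℤ) ^ r * ((m : ℤ) - (r : ℤ)) * ((j + 1).choose r : ℤ) =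
          ∑ r ∈ range (m + 1), (-1 : ℤ) ^ r * ((m : ℤ) - (r : ℤ)) * ((j + 1).choose r : ℤ) := by
        simp [sum_range_succ]
      rw [h0, ← sum_add_distrib]
      refine sum_congr rfl fun r _ => ?_
      push_cast
      ring
    rw [hl, hr, ih, alternating_sum_choose_add, Int.alternating_sum_range_choose_eq_choose]
    congr 2
    split_ifs with h
    · rw [Nat.choose_symm h]
    · rw [Nat.choose_eq_zero_of_lt (by omega), Nat.cast_zero]

/-- **(188).** For integers `m ≥ 1` and `k ≥ 1`,
`Σ_{n=1}^{m-1} (-1)^n C(m,n+1) C(k+n-1,k-1) = Σ_{r=1}^{m-1} (-1)^r (m-r) C(k,r)`. -/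
theorem alternating_binomial_sum_S2
    (m k : ℕ) (hm : 1 ≤ m) (hk : 1 ≤ k) :
    ∑ n ∈ Finset.Icc 1 (m - 1),
        (-1 : ℤ) ^ n * (m.choose (n + 1) : ℤ) * ((k + n - 1).choose (k - 1) : ℤ) =
      ∑ r ∈ Finset.Icc 1 (m - 1), (-1 : ℤ) ^ r * ((m : ℤ) - (r : ℤ)) * (k.choose r : ℤ) := by
  obtain ⟨j, rfl⟩ : ∃ j, k = j + 1 := ⟨k - 1, by omega⟩
  obtain ⟨p, rfl⟩ : ∃ p, m = p + 1 := ⟨m - 1, by omega⟩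
  have h := alternating_binomial_sum_range (p + 1) j
  have hI : Finset.Icc 1 (p + 1 - 1) = (range p).map (addRightEmbedding 1) := by
    ext x
    simp only [Finset.mem_Icc, Finset.mem_map, Finset.mem_range, addRightEmbedding_apply]
    exact ⟨fun hx => ⟨x - 1, by omega, by omega⟩, by rintro ⟨a, ha, rfl⟩; omega⟩
  rw [sum_range_succ', sum_range_succ' _ p] at h
  rw [hI]
  simp only [sum_map, addRightEmbedding_apply, Nat.add_sub_cancel]
  have hk' : ∀ n, j + 1 + (n + 1) - 1 = j + (n + 1) := fun n => by omega
  simp only [hk']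
  simpa using h
end

section
/- For all integers m ≥ 1 and k ≥ 2, one has Σ_{n=1}^{m} ( C(m, n+1) − m·C(m, n) )·(−1)^n·C(k+n−1, n) = (−1)^{m−1}·( m·C(k−1, m) + C(k−2, m−1) ). -/
/-!
By upper negation, `(-1)^n C(k+n-1, n) = C(-k, n)`, a generalized binomial coefficient over `ℤ`.
Writing `C(m, n) = C(m, m-n)` and `C(m, n+1) = C(m, m-1-n)`, both parts of the sum become
Chu–Vandermonde convolutions, with values `C(m-k, m)` and `C(m-k, m-1)`. Upper negation turns
these into `(-1)^m C(k-1, m)` and `(-1)^(m-1) C(k-2, m-1)`. The missing term `n = 0` contributes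
`C(m, 1) - m C(m, 0) = 0`.
-/

open Finset

lemma ring_choose_neg_natCast (k n : ℕ) (hk : 1 ≤ k) :
    Ring.choose (-(k : ℤ)) n = (-1) ^ n * ((k + n - 1).choose n : ℤ) := by
  rw [Ring.choose_neg, ← Ring.choose_natCast, Nat.cast_sub (by omega)]
  simp [Int.negOnePow_def, Units.smul_def]

/-- The Chu–Vandermonde convolution of `C(m, ·)` with `C(-k, ·)`, whose value `C(m-k, p)` is
rewritten by upper negation. The hypothesis makes the upper index `k + p - 1 - m` a true
natural-number difference. -/
lemma sum_choose_mul_neg_choose (m k p : ℕ) (hk : 1 ≤ k) (h : m + 1 ≤ k + p) :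
    ∑ n ∈ range (p + 1), (m.choose (p - n) : ℤ) * ((-1) ^ n * ((k + n - 1).choose n : ℤ)) =
      (-1) ^ p * ((k + p - 1 - m).choose p : ℤ) := by
  have key := Ring.add_choose_eq (r := -(k : ℤ)) (s := (m : ℤ)) p (Commute.all _ _)
  rw [Finset.Nat.sum_antidiagonal_eq_sum_range_succ_mk] at key
  have e : -(k : ℤ) + m = -((k : ℤ) - m) := by ring
  rw [e, Ring.choose_neg] at key
  have e2 : (k : ℤ) - m + p - 1 = ((k + p - 1 - m : ℕ) : ℤ) := by omega
  rw [e2, Ring.choose_natCast] at key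
  simp only [ring_choose_neg_natCast _ _ hk, Ring.choose_natCast] at key
  simp only [Int.negOnePow_def, Units.smul_def] at key
  simp at key
  rw [key]
  exact sum_congr rfl fun n _ => mul_comm _ _

theorem alternating_binomial_sum_S1
    (m k : ℕ) (hm : 1 ≤ m) (hk : 2 ≤ k) :
    ∑ n ∈ Finset.Icc 1 m,
        ((m.choose (n + 1) : ℤ) - (m : ℤ) * (m.choose n : ℤ)) *
          ((-1 : ℤ) ^ n * ((k + n - 1).choose n : ℤ)) =
      (-1) ^ (m - 1) *
        ((m : ℤ) * ((k - 1).choose m : ℤ) + ((k - 2).choose (m - 1) : ℤ)) := by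
  obtain ⟨m, rfl⟩ : ∃ l, m = l + 1 := ⟨m - 1, by omega⟩
  have hA := sum_choose_mul_neg_choose (m + 1) k (m + 1) (by omega) (by omega)
  have hB := sum_choose_mul_neg_choose (m + 1) k m (by omega) (by omega)
  rw [show k + (m + 1) - 1 - (m + 1) = k - 1 by omega] at hA
  rw [show k + m - 1 - (m + 1) = k - 2 by omega] at hB
  have hA' : ∑ n ∈ range (m + 1 + 1),
      ((m + 1).choose n : ℤ) * ((-1) ^ n * ((k + n - 1).choose n : ℤ)) =
      (-1) ^ (m + 1) * ((k - 1).choose (m + 1) : ℤ) := by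
    rw [← hA]
    refine sum_congr rfl fun n hn => ?_
    rw [Nat.choose_symm (by simp at hn; omega)]
  have hB' : ∑ n ∈ range (m + 1 + 1),
      ((m + 1).choose (n + 1) : ℤ) * ((-1) ^ n * ((k + n - 1).choose n : ℤ)) =
      (-1) ^ m * ((k - 2).choose m : ℤ) := by
    -- the term `n = m + 1` vanishes because `C(m+1, m+2) = 0`
    rw [sum_range_succ, Nat.choose_succ_self, Nat.cast_zero, zero_mul, add_zero, ← hB]
    refine sum_congr rfl fun n hn => ?_
    rw [← Nat.choose_symm_of_eq_add (n := m + 1) (a := n + 1) (b := m - n)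
      (by simp at hn; omega)]
  -- the term `n = 0` is zero, so it may be added to the sum
  have h0 : ∑ n ∈ Finset.Icc 1 (m + 1),
        (((m + 1).choose (n + 1) : ℤ) - ((m + 1 : ℕ) : ℤ) * ((m + 1).choose n : ℤ)) *
          ((-1 : ℤ) ^ n * ((k + n - 1).choose n : ℤ)) =
      ∑ n ∈ range (m + 1 + 1),
        (((m + 1).choose (n + 1) : ℤ) - ((m + 1 : ℕ) : ℤ) * ((m + 1).choose n : ℤ)) *
          ((-1 : ℤ) ^ n * ((k + n - 1).choose n : ℤ)) := by
    refine sum_subset (fun n hn => by simp at hn ⊢; omega) fun n hn hn' => ?_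
    obtain rfl : n = 0 := by simp at hn hn'; omega
    simp
  rw [h0]
  simp only [sub_mul, mul_assoc ((m + 1 : ℕ) : ℤ), sum_sub_distrib]
  rw [← mul_sum, hA', hB', Nat.add_sub_cancel]
  ring
end
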